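/- Convexity of Wehrl minus quantum entropy: Let H be a finite-dimensional complex Hilbert space, (Ω,μ) a measure space, and a ↦ φ_a ∈ H a measurable family of unit vectors with ∫_Ω |φ_a⟩⟨φ_a| dμ(a) = id_H (Bochner integral). Define the Wehrl entropy S^W[ρ] = ∫_Ω φ( ⟨φ_a, ρ φ_a⟩ ) dμ(a) for density matrices ρ on H, where φ(x) = −x ln x (with φ(0)=0). Then the map ρ ↦ S^W[ρ] − S[ρ] is convex on the set of density matrices on H: for density matrices A, B and t ∈ [0,1], S^W[tA+(1−t)B] − S[tA+(1−t)B] ≤ t( S^W[A] − S[A] ) + (1−t)( S^W[B] − S[B] ). -/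

import Mathlib

open Matrix Kronecker Real
open scoped ComplexOrder

/-- Von Neumann entropy of a (Hermitian) matrix: the sum of `-λ ln λ` over its
eigenvalues, with the convention `0 ln 0 = 0`. -/
noncomputable def entropy {n : Type*} [Fintype n] [DecidableEq n]
    (A : Matrix n n ℂ) : ℝ :=
  if h : A.IsHermitian then ∑ i, Real.negMulLog (h.eigenvalues i) else 0

/-- Partial trace over the first factor of a twofold tensor product. -/
noncomputable def ptraceFst {m k : Type*} [Fintype m]
    (ρ : Matrix (m × k) (m × k) ℂ) : Matrix k k ℂ :=
  Matrix.of fun i j => ∑ a : m, ρ (a, i) (a, j)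

/-- Partial trace over the second factor of a twofold tensor product. -/
noncomputable def ptraceSnd {m k : Type*} [Fintype k]
    (ρ : Matrix (m × k) (m × k) ℂ) : Matrix m m ℂ :=
  Matrix.of fun i j => ∑ a : k, ρ (i, a) (j, a)

/-- Partial trace over the first factor of a threefold tensor product
(indexed as `(H₁ ⊗ H₂) ⊗ H₃`). -/
noncomputable def ptraceFst₃ {a b c : Type*} [Fintype a]
    (ρ : Matrix ((a × b) × c) ((a × b) × c) ℂ) : Matrix (b × c) (b × c) ℂ :=
  Matrix.of fun p q => ∑ i : a, ρ ((i, p.1), p.2) ((i, q.1), q.2)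

open MeasureTheory

/-- Wehrl entropy of `ρ` with respect to the family of coherent states `φ`. -/
noncomputable def wehrlEntropy {n Ω : Type*} [Fintype n] [MeasurableSpace Ω]
    (μ : Measure Ω) (φ : Ω → n → ℂ) (ρ : Matrix n n ℂ) : ℝ :=
  ∫ a, Real.negMulLog ((star (φ a) ⬝ᵥ ρ *ᵥ (φ a)).re) ∂μ

/-! Put `M = a A + b B`. Passing from `A` and `B` to `M` increases the von Neumann entropy by
`a D(A‖M) + b D(B‖M)`, and the Wehrl entropy by the integral of the same combination of the
classical quantities `p (log p - log q)`, where `p = ⟨v, A v⟩` or `⟨v, B v⟩` and `q = ⟨v, M v⟩`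
with `v = φ x`. Since `∫ ⟨φ x, G φ x⟩ ∂μ = Tr G`, it suffices to find, for each of `A` and `B`, one
matrix `G` with `Re Tr G = D(A‖M)` and `p (log p - log q) ≤ Re ⟨v, G v⟩` for every vector `v`.

The scalar formula `y (log y - log x) = ∫₀¹ y (y - x) / ((1 - u) y + u x) du` suggests
`G = ∫₀¹ G_u du` with `G_u = (u Xᴴ M X + (1 - u) X A Xᴴ - A) / u`, where `X` solves the Sylvester
equation `u M X + (1 - u) X A = A`. In eigenbases of `M` and `A` the entries of `X` are those of
the identity times `y / ((1 - u) y + u x)`, which gives the trace of `G`. For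
`s = p / ((1 - u) p + u q)`, the positive matrix
`u (X - s)ᴴ M (X - s) + (1 - u) (X - s) A (X - s)ᴴ` expands by the Sylvester equation to
`u G_u + (1 - 2 s) A + s² ((1 - u) A + u M)`, whose expectation at `v` is
`u Re ⟨v, G_u v⟩ - u s (p - q)`. Hence `s (p - q) ≤ Re ⟨v, G_u v⟩`, and integrating over `u` gives
the pointwise bound. -/

section Mixture

/-- The ratio of `y` to the mixture `(1 - u) y + u x`. Its integral against `y - x` over
`u ∈ [0, 1]` is the relative entropy summand `y (log y - log x)`. -/
noncomputable def mixRatio (u x y : ℝ) : ℝ := y / ((1 - u) * y + u * x)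

variable {u x y : ℝ}

lemma mixture_pos (hx : 0 < x) (hy : 0 < y) (hu : u ∈ Set.Icc (0 : ℝ) 1) :
    0 < (1 - u) * y + u * x := by
  rcases hu.1.eq_or_lt with rfl | hu0
  · simpa using hy
  · have := mul_pos hu0 hx
    have := mul_nonneg (sub_nonneg.2 hu.2) hy.le
    linarith

lemma mixRatio_mul_mixture (hx : 0 ≤ x) (hy : 0 ≤ y) (hu0 : 0 ≤ u) (hu1 : u < 1) :
    mixRatio u x y * ((1 - u) * y + u * x) = y := by
  rcases hy.eq_or_lt with rfl | hy
  · simp [mixRatio]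
  · have := mul_pos (sub_pos.2 hu1) hy
    exact div_mul_cancel₀ _ (by positivity)

lemma continuousOn_mixRatio (hx : 0 ≤ x) (hy : 0 ≤ y) (hxy : x = 0 → y = 0) :
    ContinuousOn (fun u => mixRatio u x y) (Set.uIcc 0 1) := by
  rw [Set.uIcc_of_le zero_le_one]
  rcases hy.eq_or_lt with rfl | hy
  · simpa [mixRatio] using continuousOn_const
  · have hx : 0 < x := hx.lt_of_ne' (mt hxy hy.ne')
    exact continuousOn_const.div (by fun_prop) fun u hu => (mixture_pos hx hy hu).ne'

lemma integral_mixRatio_mul_sub (hx : 0 ≤ x) (hy : 0 ≤ y) (hxy : x = 0 → y = 0) :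
    ∫ u in (0 : ℝ)..1, mixRatio u x y * (y - x) = y * (log y - log x) := by
  have hint : IntervalIntegrable (fun u => mixRatio u x y * (y - x)) volume 0 1 :=
    ((continuousOn_mixRatio hx hy hxy).mul_const _).intervalIntegrable
  rcases hy.eq_or_lt with rfl | hy
  · simp [mixRatio]
  have hx : 0 < x := hx.lt_of_ne' (mt hxy hy.ne')
  have hderiv : ∀ u ∈ Set.uIcc (0 : ℝ) 1,
      HasDerivAt (fun u => -y * log ((1 - u) * y + u * x)) (mixRatio u x y * (y - x)) u := by
    intro u hu
    rw [Set.uIcc_of_le zero_le_one] at hu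
    have hmix : HasDerivAt (fun u : ℝ => (1 - u) * y + u * x) (-1 * y + 1 * x) u :=
      (((hasDerivAt_id u).const_sub 1).mul_const y).add ((hasDerivAt_id u).mul_const x)
    refine ((hmix.log (mixture_pos hx hy hu).ne').const_mul (-y)).congr_deriv ?_
    rw [mixRatio]
    ring
  rw [intervalIntegral.integral_eq_sub_of_hasDerivAt hderiv hint]
  simp only [sub_self, sub_zero, zero_mul, one_mul, zero_add, add_zero]
  ring

end Mixture

section Expectation

variable {n : Type*} [Fintype n]

/-- The expectation `⟨v, A v⟩` of the observable `A` in the state `v`, as a real-linear functional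
of `A`. The real part only matters when `A` is not Hermitian. -/
noncomputable def expectation (v : n → ℂ) : Matrix n n ℂ →ₗ[ℝ] ℝ where
  toFun A := (star v ⬝ᵥ A *ᵥ v).re
  map_add' A B := by rw [add_mulVec, dotProduct_add, Complex.add_re]
  map_smul' c A := by
    rw [smul_mulVec, dotProduct_smul, Complex.smul_re, RingHom.id_apply]

lemma expectation_nonneg {A : Matrix n n ℂ} (hA : A.PosSemidef) (v : n → ℂ) :
    0 ≤ expectation v A :=
  hA.re_dotProduct_nonneg v

lemma expectation_eq_zero_iff {A : Matrix n n ℂ} (hA : A.PosSemidef) (v : n → ℂ) :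
    expectation v A = 0 ↔ A *ᵥ v = 0 := by
  rw [← hA.dotProduct_mulVec_zero_iff, Complex.ext_iff]
  exact (and_iff_left (hA.1.im_star_dotProduct_mulVec_self v)).symm

lemma ker_add_le_left {A B : Matrix n n ℂ} (hA : A.PosSemidef) (hB : B.PosSemidef) {v : n → ℂ}
    (hv : (A + B) *ᵥ v = 0) : A *ᵥ v = 0 := by
  rw [← expectation_eq_zero_iff (hA.add hB), map_add] at hv
  rw [← expectation_eq_zero_iff hA]
  linarith [expectation_nonneg hA v, expectation_nonneg hB v]

lemma ker_mixture_le_left {A B : Matrix n n ℂ} (hA : A.PosSemidef) (hB : B.PosSemidef) {a b : ℝ}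
    (ha : 0 < a) (hb : 0 ≤ b) (v : n → ℂ) (hv : (a • A + b • B) *ᵥ v = 0) : A *ᵥ v = 0 := by
  have h := ker_add_le_left (hA.smul ha.le) (hB.smul hb) hv
  rw [smul_mulVec] at h
  exact (smul_eq_zero.1 h).resolve_left ha.ne'

lemma continuous_expectation (A : Matrix n n ℂ) : Continuous fun v => expectation v A := by
  change Continuous fun v => (star v ⬝ᵥ A *ᵥ v).re
  fun_prop

lemma isCompact_setOf_star_dotProduct_self_eq_one :
    IsCompact {v : n → ℂ | star v ⬝ᵥ v = 1} := by
  refine Metric.isCompact_of_isClosed_isBounded (isClosed_eq (by fun_prop) continuous_const) ?_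
  refine Metric.isBounded_closedBall (x := 0) (r := 1) |>.subset fun v hv => ?_
  have hsum : ∑ i, ‖v i‖ ^ 2 = 1 := by
    simpa [dotProduct, Complex.conj_mul', ← Complex.ofReal_pow, ← Complex.ofReal_sum] using hv
  refine mem_closedBall_zero_iff.2 ((pi_norm_le_iff_of_nonneg zero_le_one).2 fun i => ?_)
  refine (sq_le_one_iff₀ (norm_nonneg _)).1 (hsum ▸ ?_)
  exact Finset.single_le_sum (f := fun i => ‖v i‖ ^ 2) (fun i _ => sq_nonneg _) (Finset.mem_univ i)

lemma expectation_eq_sum (v : n → ℂ) (A : Matrix n n ℂ) :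
    expectation v A = (∑ i, ∑ j, A i j * (v j * (starRingEnd ℂ) (v i))).re := by
  change (star v ⬝ᵥ A *ᵥ v).re = _
  simp only [dotProduct, mulVec, Finset.mul_sum, Pi.star_apply, Complex.star_def]
  refine congrArg Complex.re (Finset.sum_congr rfl fun i _ => Finset.sum_congr rfl fun j _ => ?_)
  ring

end Expectation

section ResolutionOfIdentity

variable {n Ω : Type*} [Fintype n] [MeasurableSpace Ω] {μ : Measure Ω} {φ : Ω → n → ℂ}

lemma integrable_expectation
    (hφint : ∀ i j, Integrable (fun a => φ a i * (starRingEnd ℂ) (φ a j)) μ)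
    (A : Matrix n n ℂ) : Integrable (fun a => expectation (φ a) A) μ := by
  simp only [expectation_eq_sum]
  exact (integrable_finsetSum _ fun i _ => integrable_finsetSum _ fun j _ =>
    (hφint j i).const_mul _).re

lemma integral_expectation [DecidableEq n]
    (hφint : ∀ i j, Integrable (fun a => φ a i * (starRingEnd ℂ) (φ a j)) μ)
    (hφres : ∀ i j, ∫ a, φ a i * (starRingEnd ℂ) (φ a j) ∂μ = (1 : Matrix n n ℂ) i j)
    (A : Matrix n n ℂ) : ∫ a, expectation (φ a) A ∂μ = A.trace.re := by
  have hterm : ∀ i j, Integrable (fun a => A i j * (φ a j * (starRingEnd ℂ) (φ a i))) μ :=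
    fun i j => (hφint j i).const_mul _
  have hrow : ∀ i, Integrable (fun a => ∑ j, A i j * (φ a j * (starRingEnd ℂ) (φ a i))) μ :=
    fun i => integrable_finsetSum _ fun j _ => hterm i j
  simp only [expectation_eq_sum]
  refine (integral_re (integrable_finsetSum _ fun i _ => hrow i)).trans (congrArg Complex.re ?_)
  rw [integral_finsetSum _ fun i _ => hrow i]
  simp only [integral_finsetSum _ fun j _ => hterm _ j, integral_const_mul, hφres, one_apply,
    mul_ite, mul_one, mul_zero, Finset.sum_ite_eq', Finset.mem_univ, if_true, Matrix.trace,
    diag_apply]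

lemma isFiniteMeasure_of_unit (hφu : ∀ a, star (φ a) ⬝ᵥ φ a = 1)
    (hφint : ∀ i j, Integrable (fun a => φ a i * (starRingEnd ℂ) (φ a j)) μ) :
    IsFiniteMeasure μ := by
  classical
  have h := integrable_expectation hφint 1
  simpa [expectation, hφu, integrable_const_iff_isFiniteMeasure] using h

lemma integrable_negMulLog_expectation (hφu : ∀ a, star (φ a) ⬝ᵥ φ a = 1)
    (hφint : ∀ i j, Integrable (fun a => φ a i * (starRingEnd ℂ) (φ a j)) μ)
    (A : Matrix n n ℂ) : Integrable (fun a => negMulLog (expectation (φ a) A)) μ := by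
  have := isFiniteMeasure_of_unit hφu hφint
  obtain ⟨C, hC⟩ := isCompact_setOf_star_dotProduct_self_eq_one.exists_bound_of_continuousOn
    (continuous_negMulLog.comp (continuous_expectation A)).continuousOn
  exact Integrable.of_bound (continuous_negMulLog.comp_aestronglyMeasurable
    (integrable_expectation hφint A).1) C (.of_forall fun a => hC _ (hφu a))

end ResolutionOfIdentity

section DoubleOperatorIntegral

variable {n : Type*} [Fintype n] [DecidableEq n] {A B : Matrix n n ℂ}

lemma cfc_mul_eigenvectorUnitary (hA : A.IsHermitian) (g : ℝ → ℝ) :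
    cfc g A * hA.eigenvectorUnitary =
      hA.eigenvectorUnitary * diagonal fun i => (g (hA.eigenvalues i) : ℂ) := by
  rw [hA.cfc_eq, IsHermitian.cfc, Unitary.conjStarAlgAut_apply, mul_assoc,
    Unitary.coe_star_mul_self, mul_one]
  rfl

lemma star_eigenvectorUnitary_mul_cfc (hA : A.IsHermitian) (g : ℝ → ℝ) :
    star (hA.eigenvectorUnitary : Matrix n n ℂ) * cfc g A =
      (diagonal fun i => (g (hA.eigenvalues i) : ℂ)) *
        star (hA.eigenvectorUnitary : Matrix n n ℂ) := by
  rw [hA.cfc_eq, IsHermitian.cfc, Unitary.conjStarAlgAut_apply, ← mul_assoc, ← mul_assoc,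
    Unitary.coe_star_mul_self, one_mul]
  rfl

/-- The matrix of inner products `⟨ψⱼ, χᵢ⟩` between the eigenvectors `ψⱼ` of `A` and `χᵢ` of `B`. -/
noncomputable def eigenOverlap (hA : A.IsHermitian) (hB : B.IsHermitian) : Matrix n n ℂ :=
  star (hA.eigenvectorUnitary : Matrix n n ℂ) * hB.eigenvectorUnitary

/-- The double operator integral `∑ⱼᵢ f(αⱼ, βᵢ) Pⱼ Qᵢ`, where `A = ∑ⱼ αⱼ Pⱼ` and `B = ∑ᵢ βᵢ Qᵢ` are
the spectral decompositions. It is encoded as an entrywise multiple of the overlap matrix, written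
between the two eigenbases, and is real-linear in `f`. -/
noncomputable def doubleOpIntegral (hA : A.IsHermitian) (hB : B.IsHermitian) :
    (ℝ → ℝ → ℝ) →ₗ[ℝ] Matrix n n ℂ where
  toFun f := hA.eigenvectorUnitary *
    of (fun j i => f (hA.eigenvalues j) (hB.eigenvalues i) • eigenOverlap hA hB j i) *
    star (hB.eigenvectorUnitary : Matrix n n ℂ)
  map_add' f g := by
    rw [← add_mul, ← mul_add]
    congr 2
    ext j i
    exact add_smul (f _ _) (g _ _) (eigenOverlap hA hB j i)
  map_smul' c f := by
    rw [RingHom.id_apply, ← smul_mul_assoc, ← mul_smul_comm]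
    congr 2
    ext j i
    exact mul_smul c (f _ _) (eigenOverlap hA hB j i)

variable (hA : A.IsHermitian) (hB : B.IsHermitian)

lemma eigenOverlap_self : eigenOverlap hA hA = 1 :=
  Unitary.coe_star_mul_self _

lemma eigenvalue_eq_zero_of_ker_le (hker : ∀ v, A *ᵥ v = 0 → B *ᵥ v = 0) {j i : n}
    (hji : eigenOverlap hA hB j i ≠ 0) (hj : hA.eigenvalues j = 0) : hB.eigenvalues i = 0 := by
  have hAψ : A *ᵥ ⇑(hA.eigenvectorBasis j) = 0 := by
    rw [hA.mulVec_eigenvectorBasis, hj, zero_smul]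
  have hψB : star ⇑(hA.eigenvectorBasis j) ᵥ* B = 0 := by
    rw [← star_zero, ← hker _ hAψ, star_mulVec, hB.eq]
  have hinner : eigenOverlap hA hB j i =
      star ⇑(hA.eigenvectorBasis j) ⬝ᵥ ⇑(hB.eigenvectorBasis i) := by
    simp [eigenOverlap, mul_apply, dotProduct, star_apply]
  have hzero : hB.eigenvalues i • eigenOverlap hA hB j i = 0 := by
    rw [hinner, ← dotProduct_smul, ← hB.mulVec_eigenvectorBasis, dotProduct_mulVec, hψB,
      zero_dotProduct]
  exact (smul_eq_zero.1 hzero).resolve_right hji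

lemma doubleOpIntegral_apply (f : ℝ → ℝ → ℝ) :
    doubleOpIntegral hA hB f = hA.eigenvectorUnitary *
      of (fun j i => f (hA.eigenvalues j) (hB.eigenvalues i) • eigenOverlap hA hB j i) *
      star (hB.eigenvectorUnitary : Matrix n n ℂ) :=
  rfl

lemma doubleOpIntegral_congr {f g : ℝ → ℝ → ℝ}
    (hfg : ∀ j i, eigenOverlap hA hB j i ≠ 0 →
      f (hA.eigenvalues j) (hB.eigenvalues i) = g (hA.eigenvalues j) (hB.eigenvalues i)) :
    doubleOpIntegral hA hB f = doubleOpIntegral hA hB g := by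
  rw [doubleOpIntegral_apply, doubleOpIntegral_apply]
  congr 2
  ext j i
  by_cases hji : eigenOverlap hA hB j i = 0
  · simp [hji]
  · simp [hfg j i hji]

lemma cfc_mul_doubleOpIntegral (g : ℝ → ℝ) (f : ℝ → ℝ → ℝ) :
    cfc g A * doubleOpIntegral hA hB f = doubleOpIntegral hA hB fun x y => g x * f x y := by
  rw [doubleOpIntegral_apply, doubleOpIntegral_apply, ← mul_assoc, ← mul_assoc,
    cfc_mul_eigenvectorUnitary hA, mul_assoc _ (diagonal _)]
  congr 2
  ext j i
  simp only [diagonal_mul, of_apply, Complex.real_smul, Complex.ofReal_mul, mul_assoc]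

lemma doubleOpIntegral_mul_cfc (f : ℝ → ℝ → ℝ) (g : ℝ → ℝ) :
    doubleOpIntegral hA hB f * cfc g B = doubleOpIntegral hA hB fun x y => f x y * g y := by
  rw [doubleOpIntegral_apply, doubleOpIntegral_apply, mul_assoc, star_eigenvectorUnitary_mul_cfc hB,
    ← mul_assoc, mul_assoc _ _ (diagonal _)]
  congr 2
  ext j i
  simp only [mul_diagonal, of_apply, Complex.real_smul, Complex.ofReal_mul, mul_right_comm]

lemma mul_doubleOpIntegral (f : ℝ → ℝ → ℝ) :
    A * doubleOpIntegral hA hB f = doubleOpIntegral hA hB fun x y => x * f x y :=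
  (congrArg (· * _) (cfc_id ℝ A hA)).symm.trans (cfc_mul_doubleOpIntegral hA hB id f)

lemma doubleOpIntegral_mul (f : ℝ → ℝ → ℝ) :
    doubleOpIntegral hA hB f * B = doubleOpIntegral hA hB fun x y => f x y * y :=
  (congrArg (_ * ·) (cfc_id ℝ B hB)).symm.trans (doubleOpIntegral_mul_cfc hA hB f id)

lemma doubleOpIntegral_one : doubleOpIntegral hA hB 1 = 1 := by
  have hof : (of fun j i => (1 : ℝ → ℝ → ℝ) (hA.eigenvalues j) (hB.eigenvalues i) •
      eigenOverlap hA hB j i) = eigenOverlap hA hB := by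
    ext j i
    exact one_smul ℝ _
  rw [doubleOpIntegral_apply, hof, eigenOverlap]
  simp [mul_assoc]

lemma doubleOpIntegral_left (g : ℝ → ℝ) : doubleOpIntegral hA hB (fun x _ => g x) = cfc g A := by
  rw [← mul_one (cfc g A), ← doubleOpIntegral_one hA hB, cfc_mul_doubleOpIntegral]
  simp

lemma doubleOpIntegral_right (g : ℝ → ℝ) : doubleOpIntegral hA hB (fun _ y => g y) = cfc g B := by
  rw [← one_mul (cfc g B), ← doubleOpIntegral_one hA hB, doubleOpIntegral_mul_cfc]
  simp

lemma doubleOpIntegral_snd : doubleOpIntegral hA hB (fun _ y => y) = B :=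
  (doubleOpIntegral_right hA hB id).trans (cfc_id ℝ B hB)

lemma re_trace_doubleOpIntegral (f : ℝ → ℝ → ℝ) :
    (doubleOpIntegral hA hB f).trace.re = ∑ j, ∑ i,
      f (hA.eigenvalues j) (hB.eigenvalues i) * Complex.normSq (eigenOverlap hA hB j i) := by
  have hoverlap : star (hB.eigenvectorUnitary : Matrix n n ℂ) * hA.eigenvectorUnitary =
      star (eigenOverlap hA hB) := by
    rw [eigenOverlap, star_mul, star_star]
  rw [doubleOpIntegral_apply, trace_mul_comm, ← mul_assoc, hoverlap, trace_mul_comm, Matrix.trace,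
    Complex.re_sum]
  refine Finset.sum_congr rfl fun j _ => ?_
  rw [diag_apply, mul_apply, Complex.re_sum]
  refine Finset.sum_congr rfl fun i _ => ?_
  rw [of_apply, star_apply, smul_mul_assoc, Complex.star_def, Complex.mul_conj, Complex.smul_re,
    Complex.ofReal_re, smul_eq_mul]

lemma continuousOn_doubleOpIntegral {F : ℝ → ℝ → ℝ → ℝ} {s : Set ℝ}
    (hF : ∀ j i, eigenOverlap hA hB j i ≠ 0 →
      ContinuousOn (fun u => F u (hA.eigenvalues j) (hB.eigenvalues i)) s) :
    ContinuousOn (fun u => doubleOpIntegral hA hB (F u)) s := by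
  have hentry : ContinuousOn (fun u => of fun j i =>
      F u (hA.eigenvalues j) (hB.eigenvalues i) • eigenOverlap hA hB j i) s := by
    refine continuousOn_pi.2 fun j => continuousOn_pi.2 fun i => ?_
    by_cases hji : eigenOverlap hA hB j i = 0
    · simpa [hji] using continuousOn_const
    · exact (hF j i hji).smul continuousOn_const
  exact (continuousOn_const.mul hentry).mul continuousOn_const

lemma integral_re_trace_doubleOpIntegral {F : ℝ → ℝ → ℝ → ℝ} {a b : ℝ}
    (hF : ∀ j i, eigenOverlap hA hB j i ≠ 0 →
      IntervalIntegrable (fun u => F u (hA.eigenvalues j) (hB.eigenvalues i)) volume a b) :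
    ∫ u in a..b, (doubleOpIntegral hA hB (F u)).trace.re =
      (doubleOpIntegral hA hB fun x y => ∫ u in a..b, F u x y).trace.re := by
  have hterm : ∀ j i, IntervalIntegrable (fun u => F u (hA.eigenvalues j) (hB.eigenvalues i) *
      Complex.normSq (eigenOverlap hA hB j i)) volume a b := by
    intro j i
    by_cases hji : eigenOverlap hA hB j i = 0
    · simp [hji]
    · exact (hF j i hji).mul_const _
  have hrow : ∀ j, IntervalIntegrable (fun u => ∑ i, F u (hA.eigenvalues j) (hB.eigenvalues i) *
      Complex.normSq (eigenOverlap hA hB j i)) volume a b := by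
    intro j
    simpa only [Finset.sum_fn] using IntervalIntegrable.sum Finset.univ fun i _ => hterm j i
  simp only [re_trace_doubleOpIntegral]
  rw [intervalIntegral.integral_finsetSum fun j _ => hrow j]
  refine Finset.sum_congr rfl fun j _ => ?_
  rw [intervalIntegral.integral_finsetSum fun i _ => hterm j i]
  exact Finset.sum_congr rfl fun i _ => intervalIntegral.integral_mul_const _ _

end DoubleOperatorIntegral

section RelativeEntropy

variable {n : Type*} [Fintype n] [DecidableEq n] {A M : Matrix n n ℂ}

/-- Umegaki's quantum relative entropy `D(A‖M) = Tr A (log A - log M)`. Since `log 0 = 0` here,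
it has its usual meaning only for `ker M ⊆ ker A`, outside of which the convention would be `+∞`. -/
noncomputable def relEntropy (A M : Matrix n n ℂ) : ℝ :=
  (A * (cfc log A - cfc log M)).trace.re

lemma entropy_eq_neg_trace (hA : A.IsHermitian) :
    entropy A = -(A * cfc log A).trace.re := by
  rw [← doubleOpIntegral_left hA hA, mul_doubleOpIntegral, re_trace_doubleOpIntegral,
    eigenOverlap_self, entropy, dif_pos hA, ← Finset.sum_neg_distrib]
  refine Finset.sum_congr rfl fun j _ => ?_
  simp [one_apply, apply_ite, negMulLog]

lemma relEntropy_eq_trace_doubleOpIntegral (hM : M.IsHermitian) (hA : A.IsHermitian) :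
    relEntropy A M =
      (doubleOpIntegral hM hA fun x y => y * (log y - log x)).trace.re := by
  have hAA : A * cfc log A = doubleOpIntegral hM hA fun _ y => y * log y := by
    simpa only [doubleOpIntegral_snd] using
      doubleOpIntegral_mul_cfc hM hA (fun _ y => y) log
  have hMA : cfc log M * A = doubleOpIntegral hM hA fun x y => log x * y := by
    simpa only [doubleOpIntegral_snd] using
      cfc_mul_doubleOpIntegral hM hA log fun _ y => y
  rw [relEntropy, mul_sub, trace_sub, trace_mul_comm A (cfc log M), hAA, hMA, ← trace_sub,
    ← map_sub]
  congr 4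
  ext x y
  simp only [Pi.sub_apply]
  ring

/-- The relative resolvent of `(M, A)`: a solution `X` of `u M X + (1 - u) X A = A`. -/
noncomputable def relResolvent (hM : M.IsHermitian) (hA : A.IsHermitian) (u : ℝ) : Matrix n n ℂ :=
  doubleOpIntegral hM hA (mixRatio u)

lemma relResolvent_sylvester (hM : M.PosSemidef) (hA : A.PosSemidef) {u : ℝ} (hu0 : 0 ≤ u)
    (hu1 : u < 1) :
    u • (M * relResolvent hM.1 hA.1 u) + (1 - u) • (relResolvent hM.1 hA.1 u * A) = A := by
  rw [relResolvent, mul_doubleOpIntegral, doubleOpIntegral_mul, ← map_smul, ← map_smul, ← map_add]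
  refine (doubleOpIntegral_congr hM.1 hA.1 fun j i _ => ?_).trans (doubleOpIntegral_snd hM.1 hA.1)
  have := mixRatio_mul_mixture (hM.eigenvalues_nonneg j) (hA.eigenvalues_nonneg i) hu0 hu1
  simp only [Pi.add_apply, Pi.smul_apply, smul_eq_mul]
  linear_combination this

lemma continuousOn_relResolvent (hM : M.PosSemidef) (hA : A.PosSemidef)
    (hker : ∀ v, M *ᵥ v = 0 → A *ᵥ v = 0) :
    ContinuousOn (relResolvent hM.1 hA.1) (Set.uIcc 0 1) :=
  continuousOn_doubleOpIntegral hM.1 hA.1 fun j i hji =>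
    continuousOn_mixRatio (hM.eigenvalues_nonneg j) (hA.eigenvalues_nonneg i)
      (eigenvalue_eq_zero_of_ker_le hM.1 hA.1 hker hji)

end RelativeEntropy

section ResolventForm

variable {n : Type*} [Fintype n] {A M : Matrix n n ℂ}

/-- For a solution `X` of `u M X + (1 - u) X A = A`, this is
`(u Xᴴ M X + (1 - u) X A Xᴴ - A) / u`, written without dividing by `u`. -/
noncomputable def resolventForm (A M X : Matrix n n ℂ) : Matrix n n ℂ :=
  Xᴴ * M * X - M * X * Xᴴ + A * Xᴴ - Xᴴ * M

lemma re_trace_resolventForm (hM : M.IsHermitian) (hA : A.IsHermitian) (X : Matrix n n ℂ) :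
    (resolventForm A M X).trace.re = (X * A - M * X).trace.re := by
  have hcycle : (Xᴴ * M * X).trace = (M * X * Xᴴ).trace := by
    rw [mul_assoc, trace_mul_comm]
  have hadj : A * Xᴴ - Xᴴ * M = (X * A - M * X)ᴴ := by
    rw [conjTranspose_sub, conjTranspose_mul, conjTranspose_mul, hA.eq, hM.eq]
  rw [resolventForm, add_sub_assoc, trace_add, trace_sub, hcycle, sub_self, zero_add, hadj,
    trace_conjTranspose, Complex.star_def, Complex.conj_re]

lemma smul_resolventForm [DecidableEq n] (hM : M.IsHermitian) (hA : A.IsHermitian)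
    {X : Matrix n n ℂ} {u : ℝ} (hX : u • (M * X) + (1 - u) • (X * A) = A) (s : ℝ) :
    u • resolventForm A M X + A - (2 * s) • A + s ^ 2 • ((1 - u) • A + u • M) =
      u • ((X - s • 1)ᴴ * M * (X - s • 1)) + (1 - u) • ((X - s • 1) * A * (X - s • 1)ᴴ) := by
  have hXadj : u • (Xᴴ * M) + (1 - u) • (A * Xᴴ) = A := by
    simpa [hA.eq, hM.eq] using congrArg conjTranspose hX
  have hXX : u • (M * X * Xᴴ) + (1 - u) • (X * A * Xᴴ) = A * Xᴴ := by
    simpa only [add_mul, smul_mul_assoc] using congrArg (· * Xᴴ) hX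
  simp only [resolventForm, conjTranspose_sub, conjTranspose_smul, conjTranspose_one, star_trivial,
    sub_mul, mul_sub, smul_mul_assoc, mul_smul_comm, one_mul, mul_one]
  linear_combination (norm := module) (s - 1) • hXadj + s • hX - hXX

lemma mixRatio_mul_sub_le_expectation (hM : M.PosSemidef) (hA : A.PosSemidef) {X : Matrix n n ℂ}
    {u : ℝ} (hu0 : 0 < u) (hu1 : u < 1) (hX : u • (M * X) + (1 - u) • (X * A) = A) (v : n → ℂ) :
    mixRatio u (expectation v M) (expectation v A) * (expectation v A - expectation v M) ≤
      expectation v (resolventForm A M X) := by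
  classical
  set s := mixRatio u (expectation v M) (expectation v A)
  have hs : s * ((1 - u) * expectation v A + u * expectation v M) = expectation v A :=
    mixRatio_mul_mixture (expectation_nonneg hM v) (expectation_nonneg hA v) hu0.le hu1
  have hpos : 0 ≤ expectation v
      (u • resolventForm A M X + A - (2 * s) • A + s ^ 2 • ((1 - u) • A + u • M)) := by
    rw [smul_resolventForm hM.1 hA.1 hX]
    exact expectation_nonneg (((hM.conjTranspose_mul_mul_same _).smul hu0.le).add
      ((hA.mul_mul_conjTranspose_same _).smul (sub_nonneg.2 hu1.le))) v
  simp only [map_add, map_sub, map_smul, smul_eq_mul] at hpos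
  refine le_of_mul_le_mul_left ?_ hu0
  linear_combination hpos + (s - 1) * hs

end ResolventForm

section Domination

open scoped Matrix.Norms.Elementwise

lemma intervalIntegral_linearMap_comp_comm {E : Type*} [NormedAddCommGroup E] [NormedSpace ℝ E]
    [FiniteDimensional ℝ E] {F : Type*} [NormedAddCommGroup F] [NormedSpace ℝ F] [CompleteSpace F]
    (L : E →ₗ[ℝ] F) {K : ℝ → E} {a b : ℝ}
    (hK : IntervalIntegrable K volume a b) : ∫ u in a..b, L (K u) = L (∫ u in a..b, K u) :=
  have := FiniteDimensional.complete ℝ E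
  L.toContinuousLinearMap.intervalIntegral_comp_comm hK

variable {n : Type*} [Fintype n] [DecidableEq n] {A M : Matrix n n ℂ}

lemma integral_re_trace_resolventForm (hM : M.PosSemidef) (hA : A.PosSemidef)
    (hker : ∀ v, M *ᵥ v = 0 → A *ᵥ v = 0) :
    ∫ u in (0 : ℝ)..1, (resolventForm A M (relResolvent hM.1 hA.1 u)).trace.re =
      relEntropy A M := by
  have htrace : ∀ u, (resolventForm A M (relResolvent hM.1 hA.1 u)).trace.re =
      (doubleOpIntegral hM.1 hA.1 fun x y => mixRatio u x y * (y - x)).trace.re := by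
    intro u
    rw [re_trace_resolventForm hM.1 hA.1, relResolvent, mul_doubleOpIntegral, doubleOpIntegral_mul,
      ← map_sub]
    congr 3
    ext x y
    simp only [Pi.sub_apply]
    ring
  have hsupp := fun j i => eigenvalue_eq_zero_of_ker_le (j := j) (i := i) hM.1 hA.1 hker
  simp only [htrace]
  rw [integral_re_trace_doubleOpIntegral, relEntropy_eq_trace_doubleOpIntegral hM.1 hA.1]
  · congr 2
    exact doubleOpIntegral_congr hM.1 hA.1 fun j i hji => integral_mixRatio_mul_sub
      (hM.eigenvalues_nonneg j) (hA.eigenvalues_nonneg i) (hsupp j i hji)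
  · exact fun j i hji => ((continuousOn_mixRatio (hM.eigenvalues_nonneg j)
      (hA.eigenvalues_nonneg i) (hsupp j i hji)).mul_const _).intervalIntegrable

lemma exists_dominating_matrix (hM : M.PosSemidef) (hA : A.PosSemidef)
    (hker : ∀ v, M *ᵥ v = 0 → A *ᵥ v = 0) :
    ∃ G : Matrix n n ℂ, G.trace.re = relEntropy A M ∧ ∀ v,
      expectation v A * (log (expectation v A) - log (expectation v M)) ≤ expectation v G := by
  have hX := continuousOn_relResolvent hM hA hker
  have hK : ContinuousOn (fun u => resolventForm A M (relResolvent hM.1 hA.1 u))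
      (Set.uIcc 0 1) := by
    unfold resolventForm
    fun_prop
  refine ⟨∫ u in (0 : ℝ)..1, resolventForm A M (relResolvent hM.1 hA.1 u), ?_, fun v => ?_⟩
  · rw [← integral_re_trace_resolventForm hM hA hker]
    exact (intervalIntegral_linearMap_comp_comm
      (Complex.reLm ∘ₗ traceLinearMap n ℝ ℂ) hK.intervalIntegrable).symm
  · have hp := expectation_nonneg hA v
    have hq := expectation_nonneg hM v
    have hqp : expectation v M = 0 → expectation v A = 0 := by
      rw [expectation_eq_zero_iff hM, expectation_eq_zero_iff hA]
      exact hker v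
    rw [← integral_mixRatio_mul_sub hq hp hqp,
      ← intervalIntegral_linearMap_comp_comm _ hK.intervalIntegrable]
    refine intervalIntegral.integral_mono_on_of_le_Ioo zero_le_one
      ((continuousOn_mixRatio hq hp hqp).mul_const _).intervalIntegrable
      ((expectation v).continuous_of_finiteDimensional.comp_continuousOn hK).intervalIntegrable ?_
    exact fun u hu => mixRatio_mul_sub_le_expectation hM hA hu.1 hu.2
      (relResolvent_sylvester hM hA hu.1.le hu.2) v

end Domination

section Convexity

variable {n Ω : Type*} [Fintype n] [DecidableEq n] [MeasurableSpace Ω] {A B : Matrix n n ℂ}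
  {a b : ℝ}

lemma entropy_mixture (hA : A.IsHermitian) (hB : B.IsHermitian) :
    entropy (a • A + b • B) = a * entropy A + b * entropy B +
      a * relEntropy A (a • A + b • B) + b * relEntropy B (a • A + b • B) := by
  have hM : (a • A + b • B).IsHermitian :=
    ((IsSelfAdjoint.all a).smul hA).add ((IsSelfAdjoint.all b).smul hB)
  rw [entropy_eq_neg_trace hA, entropy_eq_neg_trace hB, entropy_eq_neg_trace hM]
  simp only [relEntropy, mul_sub, add_mul, smul_mul_assoc, trace_add, trace_sub, trace_smul,
    Complex.add_re, Complex.sub_re, Complex.smul_re, smul_eq_mul]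
  ring

lemma negMulLog_mixture (x y : ℝ) :
    negMulLog (a * x + b * y) = a * negMulLog x + b * negMulLog y +
      a * (x * (log x - log (a * x + b * y))) + b * (y * (log y - log (a * x + b * y))) := by
  simp only [negMulLog]
  ring

variable {μ : Measure Ω} {φ : Ω → n → ℂ}

lemma wehrlEntropy_mixture_le (hφu : ∀ x, star (φ x) ⬝ᵥ φ x = 1)
    (hφint : ∀ i j, Integrable (fun x => φ x i * (starRingEnd ℂ) (φ x j)) μ)
    (hφres : ∀ i j, ∫ x, φ x i * (starRingEnd ℂ) (φ x j) ∂μ = (1 : Matrix n n ℂ) i j)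
    (hA : A.PosSemidef) (hB : B.PosSemidef) (ha : 0 < a) (hb : 0 < b) :
    wehrlEntropy μ φ (a • A + b • B) ≤ a * wehrlEntropy μ φ A + b * wehrlEntropy μ φ B +
      a * relEntropy A (a • A + b • B) + b * relEntropy B (a • A + b • B) := by
  have hM := (hA.smul ha.le).add (hB.smul hb.le)
  obtain ⟨G, hGtr, hG⟩ := exists_dominating_matrix hM hA (ker_mixture_le_left hA hB ha hb.le)
  obtain ⟨H, hHtr, hH⟩ := exists_dominating_matrix hM hB fun v hv =>
    ker_mixture_le_left hB hA hb ha.le v (by rwa [add_comm])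
  have hlog := integrable_negMulLog_expectation hφu hφint
  have hexp := integrable_expectation hφint
  have hpoint : ∀ x, negMulLog (expectation (φ x) (a • A + b • B)) ≤
      a * negMulLog (expectation (φ x) A) + b * negMulLog (expectation (φ x) B) +
        expectation (φ x) (a • G + b • H) := by
    intro x
    have hGx := mul_le_mul_of_nonneg_left (hG (φ x)) ha.le
    have hHx := mul_le_mul_of_nonneg_left (hH (φ x)) hb.le
    simp only [map_add, map_smul, smul_eq_mul] at hGx hHx ⊢
    rw [negMulLog_mixture]
    linarith
  have hmix : Integrable (fun x => a * negMulLog (expectation (φ x) A) +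
      b * negMulLog (expectation (φ x) B)) μ :=
    ((hlog A).const_mul a).add ((hlog B).const_mul b)
  calc wehrlEntropy μ φ (a • A + b • B)
      ≤ ∫ x, (a * negMulLog (expectation (φ x) A) + b * negMulLog (expectation (φ x) B) +
          expectation (φ x) (a • G + b • H)) ∂μ :=
        integral_mono (hlog _) (hmix.add (hexp _)) hpoint
    _ = a * wehrlEntropy μ φ A + b * wehrlEntropy μ φ B + (a • G + b • H).trace.re := by
        rw [integral_add hmix (hexp _), integral_add ((hlog A).const_mul a) ((hlog B).const_mul b),
          integral_const_mul, integral_const_mul, integral_expectation hφint hφres]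
        rfl
    _ = _ := by
        rw [trace_add, trace_smul, trace_smul, Complex.add_re, Complex.smul_re, Complex.smul_re,
          hGtr, hHtr, smul_eq_mul, smul_eq_mul, add_assoc _ (a * _)]

theorem wehrl_minus_quantum_entropy_convex_general (hφu : ∀ x, star (φ x) ⬝ᵥ φ x = 1)
    (hφint : ∀ i j, Integrable (fun x => φ x i * (starRingEnd ℂ) (φ x j)) μ)
    (hφres : ∀ i j, ∫ x, φ x i * (starRingEnd ℂ) (φ x j) ∂μ = (1 : Matrix n n ℂ) i j) :
    ConvexOn ℝ {ρ : Matrix n n ℂ | ρ.PosSemidef} fun ρ => wehrlEntropy μ φ ρ - entropy ρ := by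
  refine convexOn_iff_forall_pos.2 ⟨fun A hA B hB a b ha hb _ => (hA.smul ha).add (hB.smul hb), ?_⟩
  intro A hA B hB a b ha hb _
  have hW := wehrlEntropy_mixture_le hφu hφint hφres hA hB ha hb
  have hS := entropy_mixture (a := a) (b := b) hA.1 hB.1
  simp only [smul_eq_mul]
  linarith

end Convexity

/-- **Convexity of Wehrl minus quantum entropy**: the map
`ρ ↦ S^W[ρ] − S[ρ]` is convex on density matrices. -/
theorem wehrl_minus_quantum_entropy_convex
    {n : Type*} [Fintype n] [DecidableEq n]
    {Ω : Type*} [MeasurableSpace Ω] (μ : Measure Ω)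
    (φ : Ω → n → ℂ)
    (hφm : ∀ i, Measurable fun a => φ a i)
    (hφu : ∀ a, star (φ a) ⬝ᵥ φ a = 1)
    (hφint : ∀ i j, Integrable (fun a => φ a i * (starRingEnd ℂ) (φ a j)) μ)
    (hφres : ∀ i j, (∫ a, φ a i * (starRingEnd ℂ) (φ a j) ∂μ) =
      (1 : Matrix n n ℂ) i j)
    (A B : Matrix n n ℂ)
    (hA : A.PosSemidef) (hAtr : A.trace = 1)
    (hB : B.PosSemidef) (hBtr : B.trace = 1)
    (t : ℝ) (ht0 : 0 ≤ t) (ht1 : t ≤ 1) :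
    wehrlEntropy μ φ ((t : ℂ) • A + ((1 - t : ℝ) : ℂ) • B)
        - entropy ((t : ℂ) • A + ((1 - t : ℝ) : ℂ) • B)
    ≤ t * (wehrlEntropy μ φ A - entropy A)
      + (1 - t) * (wehrlEntropy μ φ B - entropy B) := by
  simpa only [Complex.coe_smul, smul_eq_mul] using
    (wehrl_minus_quantum_entropy_convex_general hφu hφint hφres).2 hA hB ht0 (sub_nonneg.2 ht1)
      (add_sub_cancel t 1)
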